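/- arXiv:1703.05946 — 2 statements merged into one kernel-verified Lean document; each statement's English description precedes it below -/
import Mathlib

section
/- Let A = {a_i} with a_0 = -∞ < a_1 < ⋯ < a_{m-1} < a_m = +∞ and let f ∈ F(A) be proper. Then for each i ∈ {0,…,m-1}, the restriction of the subdifferential map ∂f to the open interval (a_i, a_{i+1}) is either (i) single-valued (∂f(x) is a singleton for every x in the interval) and constant, (ii) single-valued, continuous, and strictly monotone on the interval, or (iii) identically equal to the empty set on the interval. -/
/-!
Wherever `f` coincides near `x` with a real function `g` having derivative `d` at `x`, one has
`∂f(x) = {d}` (`subdiff_eq_singleton`). Indeed a subgradient `φ` makes `g y - φ (y - x)` locally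
minimal at `x`, so `φ = d` by Fermat's rule; conversely, convexity bounds the difference quotients
of `g` at `x` in the direction `y - x` by `f y - f x`, and letting the step tend to `0` from the
right gives `d (y - x) ≤ f y - f x`, so `d` is a subgradient.

On an interval where `f` is affine this gives the constant slope. On one where `f` is strictly
convex and differentiable it gives the derivative, which is strictly monotone, and continuous since
by Darboux's theorem its image has no gaps (`continuousOn_deriv_of_strictConvexOn`). Where `f = +∞`,
the subdifferential is empty by definition.
-/

noncomputable section


/-- Finite sets of breakpoints `-∞ = b₀ < b₁ < ⋯ < b_m = +∞`. -/
structure Breakpoints where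
  m : ℕ
  hm : 0 < m
  pts : ℕ → EReal
  bot : pts 0 = ⊥
  top : pts m = ⊤
  mono : ∀ i j : ℕ, i < j → j ≤ m → pts i < pts j

/-- The `i`-th open interval `(bᵢ, bᵢ₊₁)` determined by the breakpoints. -/
def Breakpoints.itv (B : Breakpoints) (i : ℕ) : Set ℝ :=
  {x : ℝ | B.pts i < (x : EReal) ∧ (x : EReal) < B.pts (i + 1)}

/-- Convexity for extended-real-valued functions on `ℝ`. -/
def ERealConvex (f : ℝ → EReal) : Prop :=
  ∀ x y a b : ℝ, 0 ≤ a → 0 ≤ b → a + b = 1 →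
    f (a * x + b * y) ≤ (a : EReal) * f x + (b : EReal) * f y

/-- The effective domain of an extended-real-valued function nowhere equal to `-∞`. -/
def effDom (f : ℝ → EReal) : Set ℝ := {x : ℝ | f x ≠ ⊤}

/-- `f` is (finite and) affine on `s`. -/
def IsAffineOn (f : ℝ → EReal) (s : Set ℝ) : Prop :=
  ∃ c d : ℝ, ∀ x ∈ s, f x = ((c * x + d : ℝ) : EReal)

/-- `f` is (finite,) strictly convex and differentiable on `s`. -/
def IsStrictConvexDiffOn (f : ℝ → EReal) (s : Set ℝ) : Prop :=
  ∃ g : ℝ → ℝ, (∀ x ∈ s, f x = (g x : EReal)) ∧ StrictConvexOn ℝ s g ∧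
    ∀ x ∈ s, DifferentiableAt ℝ g x

/-- Membership in the class `F(A)` for the breakpoint set `A = B`. -/
def MemFA (B : Breakpoints) (f : ℝ → EReal) : Prop :=
  (∀ x, f x ≠ ⊥) ∧ LowerSemicontinuous f ∧ ERealConvex f ∧
  ContinuousOn f (effDom f) ∧
  ∀ i : ℕ, i < B.m →
    IsAffineOn f (B.itv i) ∨ IsStrictConvexDiffOn f (B.itv i) ∨
      ∀ x ∈ B.itv i, f x = ⊤

/-- Membership in the class `F`. -/
def MemF (f : ℝ → EReal) : Prop := ∃ B : Breakpoints, MemFA B f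

/-- The convex subdifferential of `f : ℝ → (-∞,+∞]` (empty outside the effective domain). -/
def subdiff (f : ℝ → EReal) (x : ℝ) : Set ℝ :=
  {φ : ℝ | f x ≠ ⊤ ∧ ∀ y : ℝ, ((φ * (y - x) : ℝ) : EReal) + f x ≤ f y}

/-- `T` is a monotone operator. -/
def MonotoneOp (T : ℝ → Set ℝ) : Prop :=
  ∀ ⦃x u y v : ℝ⦄, u ∈ T x → v ∈ T y → 0 ≤ (u - v) * (x - y)

/-- `T` is a maximal monotone operator: its graph is not properly contained in the
graph of any monotone operator. -/
def MaxMonotoneOp (T : ℝ → Set ℝ) : Prop :=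
  MonotoneOp T ∧
    ∀ S : ℝ → Set ℝ, MonotoneOp S → (∀ x, T x ⊆ S x) → ∀ x, S x ⊆ T x

/-- `T` is single-valued and constant on `s`. -/
def SingleConstOn (T : ℝ → Set ℝ) (s : Set ℝ) : Prop :=
  ∃ c : ℝ, ∀ x ∈ s, T x = {c}

/-- `T` is single-valued, continuous and strictly monotone on `s`. -/
def SingleContStrictMonoOn (T : ℝ → Set ℝ) (s : Set ℝ) : Prop :=
  ∃ g : ℝ → ℝ, (∀ x ∈ s, T x = {g x}) ∧ ContinuousOn g s ∧ StrictMonoOn g s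

/-- `T` is identically equal to the empty set on `s`. -/
def EmptyOn (T : ℝ → Set ℝ) (s : Set ℝ) : Prop := ∀ x ∈ s, T x = ∅

theorem Breakpoints.isOpen_itv (B : Breakpoints) (i : ℕ) : IsOpen (B.itv i) :=
  (isOpen_lt continuous_const continuous_coe_real_ereal).inter
    (isOpen_lt continuous_coe_real_ereal continuous_const)

/-- The convexity inequality along the segment from `x` to `y`, in real terms. -/
theorem ERealConvex.le_of_eq_coe {f : ℝ → EReal} (hc : ERealConvex f) {x y u r v t : ℝ}
    (hx : f x = (u : EReal)) (hy : f y = (r : EReal)) (ht0 : 0 ≤ t) (ht1 : t ≤ 1)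
    (hv : f (x + t * (y - x)) = (v : EReal)) : v ≤ u + t * (r - u) := by
  have h := hc x y (1 - t) t (by linarith) ht0 (by ring)
  rw [show (1 - t) * x + t * y = x + t * (y - x) by ring, hx, hy, hv] at h
  have h' : v ≤ (1 - t) * u + t * r := by exact_mod_cast h
  linarith

/-- The subdifferential of a convex function at a point of differentiability is the singleton
consisting of the derivative. -/
theorem subdiff_eq_singleton {f : ℝ → EReal} (hbot : ∀ x, f x ≠ ⊥) (hc : ERealConvex f)
    {g : ℝ → ℝ} {x d : ℝ} (hfg : ∀ᶠ y in nhds x, f y = (g y : EReal))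
    (hg : HasDerivAt g d x) : subdiff f x = {d} := by
  have hx : f x = (g x : EReal) := hfg.self_of_nhds
  ext φ
  simp only [Set.mem_singleton_iff]
  constructor
  · rintro ⟨-, h⟩
    have hmin : IsLocalMin (fun y => g y - φ * (y - x)) x := by
      filter_upwards [hfg] with y hy
      have h1 := h y
      rw [hx, hy] at h1
      have h2 : φ * (y - x) + g x ≤ g y := by exact_mod_cast h1
      simp only [sub_self, mul_zero, sub_zero]
      linarith
    have hd : HasDerivAt (fun y => g y - φ * (y - x)) (d - φ * 1) x :=
      hg.sub (((hasDerivAt_id x).sub_const x).const_mul φ)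
    have := hmin.hasDerivAt_eq_zero hd
    linarith
  · rintro rfl
    refine ⟨by simp [hx], fun y => ?_⟩
    rcases eq_or_ne (f y) ⊤ with hy | hy
    · simp [hy]
    lift f y to ℝ using ⟨hy, hbot y⟩ with r hr
    have hline : HasDerivAt (fun t : ℝ => x + t * (y - x)) (1 * (y - x)) 0 :=
      ((hasDerivAt_id (0 : ℝ)).mul_const (y - x)).const_add x
    have hcomp : HasDerivAt (fun t : ℝ => g (x + t * (y - x))) (φ * (1 * (y - x))) 0 :=
      HasDerivAt.comp (0 : ℝ) (by simpa using hg) hline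
    have hlim := hcomp.tendsto_slope_zero_right
    have hev : ∀ᶠ t in nhds (0 : ℝ),
        f (x + t * (y - x)) = (g (x + t * (y - x)) : EReal) := by
      have ht : Filter.Tendsto (fun t : ℝ => x + t * (y - x)) (nhds 0) (nhds x) := by
        simpa using hline.continuousAt.tendsto
      exact ht.eventually hfg
    have hle : φ * (1 * (y - x)) ≤ r - g x := by
      refine le_of_tendsto hlim ?_
      filter_upwards [nhdsWithin_le_nhds hev, self_mem_nhdsWithin,
        nhdsWithin_le_nhds (Iio_mem_nhds (zero_lt_one' ℝ))] with t ht ht0 ht1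
      have ht0' : 0 < t := ht0
      have := hc.le_of_eq_coe hx hr.symm ht0'.le (le_of_lt ht1) ht
      simp only [zero_add, zero_mul, add_zero, smul_eq_mul]
      rw [inv_mul_le_iff₀ ht0']
      linarith
    rw [hx]
    have : φ * (y - x) + g x ≤ r := by linarith
    exact_mod_cast this

/-- The derivative of a strictly convex differentiable function is continuous: it is strictly
monotone and, by Darboux's theorem, has no jumps. -/
theorem continuousOn_deriv_of_strictConvexOn {g : ℝ → ℝ} {s : Set ℝ} (hs : IsOpen s)
    (hg : StrictConvexOn ℝ s g) (hd : ∀ x ∈ s, DifferentiableAt ℝ g x) :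
    ContinuousOn (deriv g) s := by
  have hmono : StrictMonoOn (deriv g) s := hg.strictMonoOn_deriv hd
  intro x hx
  refine (hmono.continuousAt_of_image_mem_nhds (hs.mem_nhds hx) ?_).continuousWithinAt
  obtain ⟨ε, hε, hball⟩ := Metric.isOpen_iff.1 hs x hx
  have hp : x - ε / 2 ∈ s := hball (by
    rw [Metric.mem_ball, Real.dist_eq, abs_lt]; constructor <;> linarith)
  have hq : x + ε / 2 ∈ s := hball (by
    rw [Metric.mem_ball, Real.dist_eq, abs_lt]; constructor <;> linarith)
  have hconn : (deriv g '' s).OrdConnected := hg.1.ordConnected.image_deriv hd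
  exact Filter.mem_of_superset
    (Icc_mem_nhds (hmono hp hx (by linarith)) (hmono hx hq (by linarith)))
    (hconn.out (Set.mem_image_of_mem _ hp) (Set.mem_image_of_mem _ hq))

/-- Structure of `F`-subdifferentials: on each open interval between consecutive
breakpoints, `∂f` is single-valued and constant, or single-valued, continuous and
strictly monotone, or identically the empty set. -/
theorem stmt2 (B : Breakpoints) (f : ℝ → EReal) (hf : MemFA B f)
    (hproper : ∃ x : ℝ, f x ≠ ⊤) :
    ∀ i : ℕ, i < B.m →
      SingleConstOn (subdiff f) (B.itv i) ∨
        SingleContStrictMonoOn (subdiff f) (B.itv i) ∨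
          EmptyOn (subdiff f) (B.itv i) := by
  intro i hi
  obtain ⟨hbot, -, hc, -, hpieces⟩ := hf
  have hopen := B.isOpen_itv i
  rcases hpieces i hi with ⟨c, d, h⟩ | ⟨g, h, hg, hd⟩ | h
  · refine Or.inl ⟨c, fun x hx => ?_⟩
    refine subdiff_eq_singleton (g := fun y => c * y + d) hbot hc
      (Filter.eventually_of_mem (hopen.mem_nhds hx) h) ?_
    simpa using ((hasDerivAt_id x).const_mul c).add_const d
  · exact Or.inr (Or.inl ⟨deriv g, fun x hx => subdiff_eq_singleton hbot hc
      (Filter.eventually_of_mem (hopen.mem_nhds hx) h) (hd x hx).hasDerivAt,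
      continuousOn_deriv_of_strictConvexOn hopen hg hd, hg.strictMonoOn_deriv hd⟩)
  · exact Or.inr (Or.inr fun x hx => Set.eq_empty_of_forall_notMem fun φ hφ => hφ.1 (h x hx))
end
end

section
/- If T : ℝ ⇒ ℝ belongs to the class 𝒯, then its inverse T⁻¹, defined by T⁻¹(y) := {x ∈ ℝ : y ∈ T(x)}, also belongs to 𝒯. -/
/-!
Let `T'` be a maximal monotone extension of `T` with pieces `Iᵢ = (bᵢ, bᵢ₊₁)`. The inverse of `T'`
is maximal monotone and extends the inverse of `T`, so only its piecewise structure is at stake.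

The range of `T'` is the union of the finitely many sets `T'(Iᵢ)` and `T'(bᵢ)`. Each of them is
order connected (for `T'(bᵢ)` this uses maximality), hence has a finite frontier
(`finite_frontier_of_ordConnected`). Take the union of all these frontiers as the breakpoints of
the inverse (`exists_breakpoints`). An open interval `K` that avoids the frontiers is, for each of
these sets, either contained in it or disjoint from it.

* If `K` is disjoint from all of them, the inverse is empty on `K`.
* If `K ⊆ T'(bᵢ)`, monotonicity forces the inverse to be constantly `{bᵢ}` on `K`
  (`inv_const_of_subset_value`).
* If `K ⊆ T'(Iᵢ)` with `T'` strictly monotone and continuous on `Iᵢ`, then the inverse is single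
  valued, strictly monotone and continuous on `K` (`inv_strict_of_subset_image`).
* If `K ⊆ T'(Iᵢ)` with `T'` constant on `Iᵢ`, then `K` is an open subset of a singleton, so empty.

No ordering of the pieces of the range is needed.
-/

noncomputable section


/-- Membership in the class `𝒯(B)`. -/
def MemTB (B : Breakpoints) (T : ℝ → Set ℝ) : Prop :=
  ∃ T' : ℝ → Set ℝ, MaxMonotoneOp T' ∧ (∀ x, T x ⊆ T' x) ∧
    ∀ i : ℕ, i < B.m →
      SingleConstOn T' (B.itv i) ∨ SingleContStrictMonoOn T' (B.itv i) ∨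
        EmptyOn T' (B.itv i)

/-- Membership in the class `𝒯`. -/
def MemT (T : ℝ → Set ℝ) : Prop := ∃ B : Breakpoints, MemTB B T

/-- The inverse of a set-valued operator. -/
def invOp (T : ℝ → Set ℝ) : ℝ → Set ℝ := fun y => {x : ℝ | y ∈ T x}

/-- The pointwise (Minkowski) sum of two set-valued operators. -/
def addOp (S₁ S₂ : ℝ → Set ℝ) : ℝ → Set ℝ :=
  fun x => {w : ℝ | ∃ u ∈ S₁ x, ∃ v ∈ S₂ x, w = u + v}

theorem finite_frontier_of_ordConnected {s : Set ℝ} (hs : s.OrdConnected) :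
    (frontier s).Finite := by
  have key : ∀ a b : ℝ, ∀ c : ℝ, a ∈ frontier s → b ∈ frontier s → c ∈ frontier s →
      a < b → b < c → False := by
    intro a b c ha hb hc hab hbc
    obtain ⟨p, hpb, hp⟩ := mem_closure_iff.1 ha.1 (Set.Iio b) isOpen_Iio hab
    obtain ⟨q, hqb, hq⟩ := mem_closure_iff.1 hc.1 (Set.Ioi b) isOpen_Ioi hbc
    exact hb.2 (mem_interior.2 ⟨Set.Ioo p q,
      Set.Ioo_subset_Icc_self.trans (hs.out hp hq), isOpen_Ioo, hpb, hqb⟩)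
  -- An infinite set of reals contains three distinct points; the middle one contradicts `key`.
  by_contra hinf
  obtain ⟨t, hts, htc⟩ := Set.Infinite.exists_subset_card_eq hinf 3
  let e := t.orderEmbOfFin htc
  exact key (e 0) (e 1) (e 2) (hts (t.orderEmbOfFin_mem htc 0)) (hts (t.orderEmbOfFin_mem htc 1))
    (hts (t.orderEmbOfFin_mem htc 2)) (e.strictMono (by decide)) (e.strictMono (by decide))

theorem Breakpoints.ordConnected_itv (B : Breakpoints) (i : ℕ) : (B.itv i).OrdConnected := by
  refine ⟨fun x hx y hy z hz => ⟨hx.1.trans_le ?_, lt_of_le_of_lt ?_ hy.2⟩⟩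
  · exact EReal.coe_le_coe_iff.2 hz.1
  · exact EReal.coe_le_coe_iff.2 hz.2

theorem Breakpoints.cover (B : Breakpoints) (x : ℝ) :
    ∃ i < B.m, x ∈ B.itv i ∨ (B.pts i).toReal = x := by
  classical
  let i := Nat.findGreatest (fun j => B.pts j ≤ (x : EReal)) B.m
  have h0 : B.pts 0 ≤ (x : EReal) := by rw [B.bot]; exact bot_le
  have hi : B.pts i ≤ (x : EReal) :=
    Nat.findGreatest_spec (P := fun j => B.pts j ≤ (x : EReal)) (Nat.zero_le B.m) h0
  have him : i < B.m := by
    refine lt_of_le_of_ne (Nat.findGreatest_le _) fun h => ?_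
    rw [h, B.top] at hi
    exact EReal.coe_ne_top x (top_le_iff.1 hi)
  have hi1 : (x : EReal) < B.pts (i + 1) :=
    not_le.1 (Nat.findGreatest_is_greatest (P := fun j => B.pts j ≤ (x : EReal))
      (Nat.lt_succ_self i) him)
  refine ⟨i, him, ?_⟩
  rcases hi.lt_or_eq with h | h
  · exact Or.inl ⟨h, hi1⟩
  · right
    rw [h, EReal.toReal_coe]

theorem exists_breakpoints {C : Set ℝ} (hC : C.Finite) :
    ∃ B : Breakpoints, ∀ i < B.m, Disjoint (B.itv i) C := by
  classical
  let D : Finset EReal := insert ⊥ (insert ⊤ (hC.toFinset.image ((↑) : ℝ → EReal)))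
  have hbot : (⊥ : EReal) ∈ D := by simp [D]
  have htop : (⊤ : EReal) ∈ D := by simp [D]
  have hcard : 1 < D.card := Finset.one_lt_card.2 ⟨⊥, hbot, ⊤, htop, bot_ne_top⟩
  obtain ⟨m, hm⟩ : ∃ m, D.card = m + 1 := ⟨D.card - 1, by omega⟩
  let e := D.orderEmbOfFin hm
  have hrange : ∀ d ∈ D, ∃ j, e j = d := by
    intro d hd
    have : d ∈ Set.range e := by rw [Finset.range_orderEmbOfFin]; exact hd
    exact this
  let p : ℕ → EReal := fun i => if h : i < m + 1 then e ⟨i, h⟩ else ⊤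
  have hp : ∀ i (h : i < m + 1), p i = e ⟨i, h⟩ := fun i h => dif_pos h
  refine ⟨⟨m, by omega, p, ?_, ?_, ?_⟩, ?_⟩
  · obtain ⟨j, hj⟩ := hrange ⊥ hbot
    rw [hp 0 (by omega), ← le_bot_iff, ← hj]
    exact e.monotone (Fin.mk_le_of_le_val (Nat.zero_le _))
  · obtain ⟨j, hj⟩ := hrange ⊤ htop
    rw [hp m (by omega), ← top_le_iff, ← hj]
    exact e.monotone (Fin.mk_le_mk.2 (by have := j.2; omega) : j ≤ ⟨m, _⟩)
  · intro i j hij hj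
    rw [hp i (by omega), hp j (by omega)]
    exact e.strictMono (Fin.mk_lt_mk.2 hij)
  · intro i hi
    change i < m at hi
    refine Set.disjoint_left.2 fun x hx hxC => ?_
    have h1 : p i < (x : EReal) := hx.1
    have h2 : (x : EReal) < p (i + 1) := hx.2
    obtain ⟨j, hj⟩ := hrange x (by simp [D, hxC])
    rw [hp i (by omega), ← hj] at h1
    rw [hp (i + 1) (by omega), ← hj] at h2
    have h3 := Fin.lt_def.1 (e.lt_iff_lt.1 h1)
    have h4 := Fin.lt_def.1 (e.lt_iff_lt.1 h2)
    simp only at h3 h4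
    omega

theorem monotoneOp_inv {T : ℝ → Set ℝ} (hT : MonotoneOp T) : MonotoneOp (invOp T) := by
  intro x u y v hu hv
  have := hT (x := u) (u := x) (y := v) (v := y) hu hv
  linarith [mul_comm (u - v) (x - y)]

theorem maxMonotoneOp_inv {T : ℝ → Set ℝ} (hT : MaxMonotoneOp T) : MaxMonotoneOp (invOp T) :=
  ⟨monotoneOp_inv hT.1, fun S hS hTS x u hu =>
    hT.2 (invOp S) (monotoneOp_inv hS) (fun _ _ hv => hTS _ hv) u hu⟩

/-- The values of a maximal monotone operator are order connected: a value lying between two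
values at `b` can be added to the graph without destroying monotonicity. -/
theorem MaxMonotoneOp.ordConnected {T : ℝ → Set ℝ} (hT : MaxMonotoneOp T) (b : ℝ) :
    (T b).OrdConnected := by
  refine ⟨fun u hu v hv w hw => ?_⟩
  have hw' : ∀ x z : ℝ, z ∈ T x → 0 ≤ (z - w) * (x - b) := by
    intro x z hz
    have h1 := hT.1 hz hu
    have h2 := hT.1 hz hv
    rcases le_total x b with h | h
    · nlinarith [mul_nonneg (sub_nonneg.2 hw.1) (sub_nonneg.2 h)]
    · nlinarith [mul_nonneg (sub_nonneg.2 hw.2) (sub_nonneg.2 h)]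
  refine hT.2 (fun x => {z | z ∈ T x ∨ (x = b ∧ z = w)}) ?_ (fun _ z hz => Or.inl hz) b
    (Or.inr ⟨rfl, rfl⟩)
  rintro x z y z' (hz | ⟨rfl, rfl⟩) (hz' | ⟨rfl, rfl⟩)
  · exact hT.1 hz hz'
  · exact hw' _ _ hz
  · nlinarith [hw' _ _ hz']
  · simp

theorem inv_const_of_subset_value {T : ℝ → Set ℝ} (hT : MonotoneOp T) {K : Set ℝ} (hK : IsOpen K)
    {b : ℝ} (hKb : K ⊆ T b) : SingleConstOn (invOp T) K := by
  refine ⟨b, fun y hy => Set.eq_singleton_iff_unique_mem.2 ⟨hKb hy, fun x hx => ?_⟩⟩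
  obtain ⟨ε, hε, hball⟩ := Metric.isOpen_iff.1 hK y hy
  have h1 : y + ε / 2 ∈ K := hball (by
    rw [Metric.mem_ball, Real.dist_eq, abs_lt]; constructor <;> linarith)
  have h2 : y - ε / 2 ∈ K := hball (by
    rw [Metric.mem_ball, Real.dist_eq, abs_lt]; constructor <;> linarith)
  have h3 := hT (hKb h1) hx
  have h4 := hT (hKb h2) hx
  apply le_antisymm <;> nlinarith

theorem inv_strict_of_subset_image {T : ℝ → Set ℝ} (hT : MonotoneOp T) {K I : Set ℝ}
    (hK : IsOpen K) (hI : IsOpen I) {g : ℝ → ℝ} (hTg : ∀ x ∈ I, T x = {g x})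
    (hgc : ContinuousOn g I) (hg : StrictMonoOn g I) (hKI : K ⊆ g '' I) :
    SingleContStrictMonoOn (invOp T) K := by
  choose! h hhI hgh using fun y (hy : y ∈ K) => hKI hy
  have hmem : ∀ x ∈ I, g x ∈ T x := fun x hx => by rw [hTg x hx]; rfl
  have hmono : StrictMonoOn h K := fun y hy z hz hyz => by
    rw [← hg.lt_iff_lt (hhI _ hy) (hhI _ hz), hgh _ hy, hgh _ hz]
    exact hyz
  refine ⟨h, fun y hy => Set.eq_singleton_iff_unique_mem.2 ⟨?_, fun x hx => ?_⟩, ?_, hmono⟩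
  · have := hmem _ (hhI _ hy)
    rw [hgh _ hy] at this
    exact this
  · -- A second preimage `x` of `y` would force `g` to be constant between `h y` and `x`,
    -- against strict monotonicity of `g` near `h y`.
    obtain ⟨ε, hε, hball⟩ := Metric.isOpen_iff.1 hI (h y) (hhI _ hy)
    have hx' : y ∈ T x := hx
    rcases lt_trichotomy x (h y) with hlt | heq | hlt
    · obtain ⟨z, hz1, hz2⟩ := exists_between (max_lt hlt (sub_lt_self (h y) hε))
      obtain ⟨hz3, hz4⟩ := max_lt_iff.1 hz1
      have hzI : z ∈ I := hball (by
        rw [Metric.mem_ball, Real.dist_eq, abs_lt]; constructor <;> linarith)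
      have h1 := hT (hmem z hzI) hx'
      have h2 := hg hzI (hhI _ hy) hz2
      rw [hgh _ hy] at h2
      nlinarith
    · exact heq
    · obtain ⟨z, hz1, hz2⟩ := exists_between (lt_min hlt (lt_add_of_pos_right (h y) hε))
      obtain ⟨hz3, hz4⟩ := lt_min_iff.1 hz2
      have hzI : z ∈ I := hball (by
        rw [Metric.mem_ball, Real.dist_eq, abs_lt]; constructor <;> linarith)
      have h1 := hT (hmem z hzI) hx'
      have h2 := hg (hhI _ hy) hzI hz1
      rw [hgh _ hy] at h2
      nlinarith
  · intro y hy
    refine (hmono.continuousAt_of_image_mem_nhds (hK.mem_nhds hy) ?_).continuousWithinAt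
    have hgK : g ⁻¹' K ∈ nhds (h y) :=
      (hgc.continuousAt (hI.mem_nhds (hhI _ hy))).preimage_mem_nhds
        (by rw [hgh _ hy]; exact hK.mem_nhds hy)
    filter_upwards [hgK, hI.mem_nhds (hhI _ hy)] with x hxK hxI
    exact ⟨g x, hxK, hg.injOn (hhI _ hxK) hxI (hgh _ hxK)⟩

theorem subset_or_disjoint_of_disjoint_frontier {K A : Set ℝ} (hK : IsPreconnected K)
    (hKA : Disjoint K (frontier A)) : K ⊆ A ∨ Disjoint K A := by
  by_contra! hcon
  obtain ⟨hns, hnd⟩ := hcon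
  obtain ⟨x, hxK, hxA⟩ := Set.not_disjoint_iff.1 hnd
  obtain ⟨y, hyK, hyA⟩ := Set.not_subset.1 hns
  have hcover : K ⊆ interior A ∪ interior Aᶜ := fun z hz => by
    by_contra hz'
    rw [interior_compl, Set.mem_union, not_or, Set.mem_compl_iff, not_not] at hz'
    exact Set.disjoint_left.1 hKA hz ⟨hz'.2, hz'.1⟩
  have hxi : x ∈ interior A := (hcover hxK).resolve_right fun h => interior_subset h hxA
  have hyi : y ∈ interior Aᶜ := (hcover hyK).resolve_left fun h => hyA (interior_subset h)
  obtain ⟨z, -, hz1, hz2⟩ := hK _ _ isOpen_interior isOpen_interior hcover ⟨x, hxK, hxi⟩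
    ⟨y, hyK, hyi⟩
  exact interior_subset hz2 (interior_subset hz1)

/-- The class `𝒯` is closed under taking inverses. -/
theorem stmt5 (T : ℝ → Set ℝ) (hT : MemT T) : MemT (invOp T) := by
  obtain ⟨B, T', hmax, hsub, hpiece⟩ := hT
  let A : ℕ → Set ℝ := fun i => ⋃ x ∈ B.itv i, T' x
  have himage : ∀ i, ∀ g : ℝ → ℝ, (∀ x ∈ B.itv i, T' x = {g x}) → A i = g '' B.itv i := by
    intro i g hg
    ext u
    simp only [A, Set.mem_iUnion, Set.mem_image, exists_prop]
    refine exists_congr fun x => and_congr_right fun hx => ?_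
    rw [hg x hx, Set.mem_singleton_iff, eq_comm]
  have hA : ∀ i < B.m, (A i).OrdConnected := by
    intro i hi
    have hpre : IsPreconnected (B.itv i) := (B.ordConnected_itv i).isPreconnected
    rcases hpiece i hi with ⟨c, hc⟩ | ⟨g, hg, hgc, -⟩ | hempty
    · rw [himage i (fun _ => c) hc]
      exact (hpre.image _ continuousOn_const).ordConnected
    · rw [himage i g hg]
      exact (hpre.image _ hgc).ordConnected
    · have : A i = ∅ := by
        simp only [A, Set.iUnion_eq_empty]
        exact hempty
      rw [this]
      exact Set.ordConnected_empty
  let C : Set ℝ := ⋃ i ∈ Set.Iio B.m, (frontier (A i) ∪ frontier (T' (B.pts i).toReal))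
  have hC : C.Finite := (Set.finite_Iio B.m).biUnion fun i hi =>
    (finite_frontier_of_ordConnected (hA i hi)).union
      (finite_frontier_of_ordConnected (hmax.ordConnected _))
  obtain ⟨B', hB'⟩ := exists_breakpoints hC
  refine ⟨B', invOp T', maxMonotoneOp_inv hmax, fun _ _ hx => hsub _ hx, fun k hk => ?_⟩
  have hKo := B'.isOpen_itv k
  have hKc : IsPreconnected (B'.itv k) := (B'.ordConnected_itv k).isPreconnected
  have hKC := hB' k hk
  generalize B'.itv k = K at hKo hKc hKC
  have hKA : ∀ i < B.m, K ⊆ A i ∨ Disjoint K (A i) := fun i hi =>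
    subset_or_disjoint_of_disjoint_frontier hKc (hKC.mono_right fun x hx =>
      Set.mem_biUnion (x := i) hi (Or.inl hx))
  have hKb : ∀ i < B.m, K ⊆ T' (B.pts i).toReal ∨ Disjoint K (T' (B.pts i).toReal) := fun i hi =>
    subset_or_disjoint_of_disjoint_frontier hKc (hKC.mono_right fun x hx =>
      Set.mem_biUnion (x := i) hi (Or.inr hx))
  by_cases h1 : ∃ i < B.m, K ⊆ T' (B.pts i).toReal
  · obtain ⟨i, -, hi⟩ := h1
    exact Or.inl (inv_const_of_subset_value hmax.1 hKo hi)
  by_cases h2 : ∃ i < B.m, K ⊆ A i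
  · obtain ⟨i, him, hi⟩ := h2
    rcases hpiece i him with ⟨c, hc⟩ | ⟨g, hg, hgc, hgm⟩ | hempty
    · -- `K` is an open subset of `{c}`, hence empty.
      rw [himage i (fun _ => c) hc] at hi
      have hKe : K ⊆ interior {c} := hKo.subset_interior_iff.2
        (hi.trans (by rintro _ ⟨_, _, rfl⟩; rfl))
      rw [interior_singleton] at hKe
      exact Or.inr (Or.inr fun y hy => (hKe hy).elim)
    · rw [himage i g hg] at hi
      exact Or.inr (Or.inl
        (inv_strict_of_subset_image hmax.1 hKo (B.isOpen_itv i) hg hgc hgm hi))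
    · refine Or.inr (Or.inr fun y hy => ?_)
      obtain ⟨x, hx, hyx⟩ := Set.mem_iUnion₂.1 (hi hy)
      rw [hempty x hx] at hyx
      exact hyx.elim
  · push Not at h1 h2
    refine Or.inr (Or.inr fun y hy => Set.eq_empty_iff_forall_notMem.2 fun x hx => ?_)
    have hx' : y ∈ T' x := hx
    obtain ⟨i, him, hxi | hxi⟩ := B.cover x
    · exact Set.disjoint_left.1 ((hKA i him).resolve_left (h2 i him)) hy
        (Set.mem_biUnion hxi hx')
    · refine Set.disjoint_left.1 ((hKb i him).resolve_left (h1 i him)) hy ?_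
      rw [hxi]
      exact hx'
end
end
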